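/- arXiv:1902.07970 — 3 statements merged into one kernel-verified Lean document; each statement's English description precedes it below -/
import Mathlib

section
/- Let n ≥ 1, N = 2n+1, let a_0, a_1, …, a_n, b_1, …, b_n be real numbers, and let T_n(t) = a_0/2 + Σ_{k=1}^n (a_k cos kt + b_k sin kt). Let (v_k)_{k≥1} be a sequence of real numbers with Σ_{k=1}^∞ |v_k| < ∞, and for 1 ≤ k ≤ n define C_k(t) = v_k cos kt + Σ_{m=1}^∞ [v_{mN+k} cos((mN+k)t) + v_{mN−k} cos((mN−k)t)], S_k(t) = v_k sin kt + Σ_{m=1}^∞ [v_{mN+k} sin((mN+k)t) − v_{mN−k} sin((mN−k)t)], and H_k = v_k + Σ_{m=1}^∞ [v_{mN+k} + v_{mN−k}]. If H_k ≠ 0 for every k = 1, …, n, then the function ST(t) = a_0/2 + Σ_{k=1}^n H_k^{−1} [a_k C_k(t) + b_k S_k(t)] satisfies ST(t_i) = T_n(t_i) at every node t_i = 2π(i−1)/N, i = 1, …, N. -/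
open Real Finset

/-!
At a point `x` with `N x ∈ 2πℤ` the frequencies `mN + k` and `mN - k` are aliases of `k`: `cos`
takes the same value at all three, and `sin` changes sign at `mN - k`, which the minus sign in
`S_k` compensates. So every term of the series for `C_k` and `S_k` is the corresponding term of the
series for `H_k` times `cos (k x)` or `sin (k x)`, and dividing by `H_k` leaves the term of `T_n`.
-/

section Aliasing

variable {N k : ℕ} {j : ℤ} {x : ℝ}

lemma alias_add_mul (hx : N * x = j * (2 * π)) (m k : ℕ) :
    ((m * N + k : ℕ) : ℝ) * x = k * x + ((m * j : ℤ) : ℝ) * (2 * π) := by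
  push_cast
  linear_combination (m : ℝ) * hx

lemma alias_sub_mul (hx : N * x = j * (2 * π)) {m : ℕ} (hk : k ≤ m * N) :
    ((m * N - k : ℕ) : ℝ) * x = ((m * j : ℤ) : ℝ) * (2 * π) - k * x := by
  push_cast [Nat.cast_sub hk]
  linear_combination (m : ℝ) * hx

lemma cos_alias_add (hx : N * x = j * (2 * π)) (m k : ℕ) :
    cos (((m * N + k : ℕ) : ℝ) * x) = cos (k * x) := by
  rw [alias_add_mul hx, cos_add_int_mul_two_pi]

lemma cos_alias_sub (hx : N * x = j * (2 * π)) {m : ℕ} (hk : k ≤ m * N) :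
    cos (((m * N - k : ℕ) : ℝ) * x) = cos (k * x) := by
  rw [alias_sub_mul hx hk, cos_int_mul_two_pi_sub]

lemma sin_alias_add (hx : N * x = j * (2 * π)) (m k : ℕ) :
    sin (((m * N + k : ℕ) : ℝ) * x) = sin (k * x) := by
  rw [alias_add_mul hx, sin_add_int_mul_two_pi]

lemma sin_alias_sub (hx : N * x = j * (2 * π)) {m : ℕ} (hk : k ≤ m * N) :
    sin (((m * N - k : ℕ) : ℝ) * x) = -sin (k * x) := by
  rw [alias_sub_mul hx hk, sin_int_mul_two_pi_sub]

end Aliasing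

/-- The normalizer `H_k = v_k + Σ_{m≥1} (v_{mN+k} + v_{mN-k})`; as in the two definitions below,
the index `m` is shifted to start at `0`, and `mN - k` is truncated unless `k ≤ N`. -/
noncomputable def aliasedWeight (v : ℕ → ℝ) (N k : ℕ) : ℝ :=
  v k + ∑' m : ℕ, (v ((m + 1) * N + k) + v ((m + 1) * N - k))

/-- The function `C_k`, which attaches to `cos (k x)` the cosines of all aliases of `k` modulo `N`,
weighted by the convergence factors `v`. -/
noncomputable def aliasedCos (v : ℕ → ℝ) (N k : ℕ) (x : ℝ) : ℝ :=
  v k * cos (k * x) +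
    ∑' m : ℕ, (v ((m + 1) * N + k) * cos ((((m + 1) * N + k : ℕ) : ℝ) * x) +
      v ((m + 1) * N - k) * cos ((((m + 1) * N - k : ℕ) : ℝ) * x))

/-- The function `S_k`, the sine counterpart of `aliasedCos`; the frequencies `mN - k` enter with a
minus sign. -/
noncomputable def aliasedSin (v : ℕ → ℝ) (N k : ℕ) (x : ℝ) : ℝ :=
  v k * sin (k * x) +
    ∑' m : ℕ, (v ((m + 1) * N + k) * sin ((((m + 1) * N + k : ℕ) : ℝ) * x) -
      v ((m + 1) * N - k) * sin ((((m + 1) * N - k : ℕ) : ℝ) * x))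

lemma summable_alias_pair {G : Type*} [AddCommGroup G] [UniformSpace G] [IsUniformAddGroup G]
    [CompleteSpace G] {f : ℕ → G} (hf : Summable f) {N k : ℕ} (hN : N ≠ 0) (hk : k ≤ N) :
    Summable fun m : ℕ => f ((m + 1) * N + k) + f ((m + 1) * N - k) := by
  have hle (m : ℕ) : k ≤ (m + 1) * N := hk.trans (Nat.le_mul_of_pos_left N m.succ_pos)
  have hmul : Function.Injective fun m : ℕ => (m + 1) * N :=
    (mul_left_injective₀ hN).comp Nat.succ_injective
  have hadd : Function.Injective fun m : ℕ => (m + 1) * N + k :=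
    (add_left_injective k).comp hmul
  have hsub : Function.Injective fun m : ℕ => (m + 1) * N - k := fun m m' h =>
    hmul ((tsub_left_inj (hle m) (hle m')).mp h)
  exact (hf.comp_injective hadd).add (hf.comp_injective hsub)

section Nodes

variable {v : ℕ → ℝ} {N k : ℕ} {j : ℤ} {x s : ℝ}

lemma hasSum_alias_cos (hk : k ≤ N) (hx : N * x = j * (2 * π))
    (hs : HasSum (fun m : ℕ => v ((m + 1) * N + k) + v ((m + 1) * N - k)) s) :
    HasSum (fun m : ℕ => v ((m + 1) * N + k) * cos ((((m + 1) * N + k : ℕ) : ℝ) * x) +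
      v ((m + 1) * N - k) * cos ((((m + 1) * N - k : ℕ) : ℝ) * x)) (s * cos (k * x)) := by
  refine (hs.mul_right (cos (k * x))).congr_fun fun m => ?_
  rw [cos_alias_add hx, cos_alias_sub hx (hk.trans (Nat.le_mul_of_pos_left N m.succ_pos))]
  ring

lemma hasSum_alias_sin (hk : k ≤ N) (hx : N * x = j * (2 * π))
    (hs : HasSum (fun m : ℕ => v ((m + 1) * N + k) + v ((m + 1) * N - k)) s) :
    HasSum (fun m : ℕ => v ((m + 1) * N + k) * sin ((((m + 1) * N + k : ℕ) : ℝ) * x) -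
      v ((m + 1) * N - k) * sin ((((m + 1) * N - k : ℕ) : ℝ) * x)) (s * sin (k * x)) := by
  refine (hs.mul_right (sin (k * x))).congr_fun fun m => ?_
  rw [sin_alias_add hx, sin_alias_sub hx (hk.trans (Nat.le_mul_of_pos_left N m.succ_pos))]
  ring

lemma aliasedCos_eq_mul_cos (hk : k ≤ N) (hx : N * x = j * (2 * π))
    (hv : Summable fun m : ℕ => v ((m + 1) * N + k) + v ((m + 1) * N - k)) :
    aliasedCos v N k x = aliasedWeight v N k * cos (k * x) := by
  rw [aliasedCos, aliasedWeight, (hasSum_alias_cos hk hx hv.hasSum).tsum_eq, add_mul]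

lemma aliasedSin_eq_mul_sin (hk : k ≤ N) (hx : N * x = j * (2 * π))
    (hv : Summable fun m : ℕ => v ((m + 1) * N + k) + v ((m + 1) * N - k)) :
    aliasedSin v N k x = aliasedWeight v N k * sin (k * x) := by
  rw [aliasedSin, aliasedWeight, (hasSum_alias_sin hk hx hv.hasSum).tsum_eq, add_mul]

end Nodes

theorem spline_interpolates_poly_grid0_general
    {n N : ℕ} (hnN : n ≤ N) {a0 : ℝ} {a b : ℕ → ℝ} {T : ℝ → ℝ}
    (hT : ∀ x, T x = a0 / 2 + ∑ k ∈ Icc 1 n, (a k * cos (k * x) + b k * sin (k * x)))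
    {v : ℕ → ℝ}
    (hv : ∀ k, 1 ≤ k → k ≤ n → Summable fun m : ℕ => v ((m + 1) * N + k) + v ((m + 1) * N - k))
    {C S : ℕ → ℝ → ℝ} {H : ℕ → ℝ}
    (hC : ∀ k, 1 ≤ k → k ≤ n → ∀ x, C k x = aliasedCos v N k x)
    (hS : ∀ k, 1 ≤ k → k ≤ n → ∀ x, S k x = aliasedSin v N k x)
    (hH : ∀ k, 1 ≤ k → k ≤ n → H k = aliasedWeight v N k)
    (hHne : ∀ k, 1 ≤ k → k ≤ n → H k ≠ 0) {ST : ℝ → ℝ}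
    (hST : ∀ x, ST x = a0 / 2 + ∑ k ∈ Icc 1 n, (H k)⁻¹ * (a k * C k x + b k * S k x))
    {x : ℝ} {j : ℤ} (hx : N * x = j * (2 * π)) :
    ST x = T x := by
  rw [hST, hT]
  refine congrArg (a0 / 2 + ·) (sum_congr rfl fun k hk => ?_)
  obtain ⟨h1, hn⟩ := mem_Icc.mp hk
  have hCx : C k x = H k * cos (k * x) := by
    rw [hC k h1 hn, hH k h1 hn, aliasedCos_eq_mul_cos (hn.trans hnN) hx (hv k h1 hn)]
  have hSx : S k x = H k * sin (k * x) := by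
    rw [hS k h1 hn, hH k h1 hn, aliasedSin_eq_mul_sin (hn.trans hnN) hx (hv k h1 hn)]
  have hHk : H k ≠ 0 := hHne k h1 hn
  rw [hCx, hSx]
  field_simp

lemma natCast_mul_gridNode {N : ℕ} (hN : N ≠ 0) (i : ℕ) :
    N * (2 * π * ((i : ℝ) - 1) / N) = ((i - 1 : ℤ) : ℝ) * (2 * π) := by
  push_cast
  field_simp

/-- Theorem 1 of the paper (sufficiency, grid `Δ_N^{(0)}`): with the normalizing
multipliers `H k = v k + Σ_{m≥1} (v (mN+k) + v (mN-k))`, assumed nonzero, the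
trigonometric spline `ST` interpolates the trigonometric polynomial `T` at the
nodes `t i = 2π(i-1)/N`, `i = 1, …, N`, `N = 2n+1`. -/
theorem spline_interpolates_poly_grid0
    (n N : ℕ) (hn : 1 ≤ n) (hN : N = 2 * n + 1)
    (a0 : ℝ) (a b : ℕ → ℝ)
    (T : ℝ → ℝ)
    (hT : ∀ x, T x = a0 / 2 +
      ∑ k ∈ Finset.Icc 1 n, (a k * Real.cos ((k : ℝ) * x) + b k * Real.sin ((k : ℝ) * x)))
    (v : ℕ → ℝ) (hv : Summable fun k => |v k|)
    (C S : ℕ → ℝ → ℝ) (H : ℕ → ℝ)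
    (hC : ∀ k, 1 ≤ k → k ≤ n → ∀ x, C k x = v k * Real.cos ((k : ℝ) * x) +
      ∑' m : ℕ, (v ((m + 1) * N + k) * Real.cos ((((m + 1) * N + k : ℕ) : ℝ) * x) +
        v ((m + 1) * N - k) * Real.cos ((((m + 1) * N - k : ℕ) : ℝ) * x)))
    (hS : ∀ k, 1 ≤ k → k ≤ n → ∀ x, S k x = v k * Real.sin ((k : ℝ) * x) +
      ∑' m : ℕ, (v ((m + 1) * N + k) * Real.sin ((((m + 1) * N + k : ℕ) : ℝ) * x) -
        v ((m + 1) * N - k) * Real.sin ((((m + 1) * N - k : ℕ) : ℝ) * x)))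
    (hH : ∀ k, 1 ≤ k → k ≤ n →
      H k = v k + ∑' m : ℕ, (v ((m + 1) * N + k) + v ((m + 1) * N - k)))
    (hHne : ∀ k, 1 ≤ k → k ≤ n → H k ≠ 0)
    (ST : ℝ → ℝ)
    (hST : ∀ x, ST x = a0 / 2 +
      ∑ k ∈ Finset.Icc 1 n, (H k)⁻¹ * (a k * C k x + b k * S k x))
    (t : ℕ → ℝ) (ht : ∀ i, t i = 2 * π * ((i : ℝ) - 1) / N) :
    ∀ i ∈ Finset.Icc 1 N, ST (t i) = T (t i) := fun i _ =>
  spline_interpolates_poly_grid0_general (by omega) hT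
    (fun _ _ hk => summable_alias_pair hv.of_abs (by omega) (by omega))
    hC hS hH hHne hST (ht i ▸ natCast_mul_gridNode (by omega) i)
end

section
/- Let n ≥ 1, N = 2n+1, let r ≥ 1 be a natural number, and let a_0, …, a_n, b_1, …, b_n be real numbers. Write sinc x = sin x / x, v2_j(r) = |sinc(πj/N)|^{1+r}, and v3_j(r) = j^{−(1+r)}. For a convergence-factor sequence v, define for 1 ≤ k ≤ n: C_k(v,t) = v_k cos kt + Σ_{m=1}^∞ [v_{mN+k} cos((mN+k)t) + v_{mN−k} cos((mN−k)t)], S_k(v,t) = v_k sin kt + Σ_{m=1}^∞ [v_{mN+k} sin((mN+k)t) − v_{mN−k} sin((mN−k)t)], H_k(v) = v_k + Σ_{m=1}^∞ [v_{mN+k} + v_{mN−k}], and ST(v,t) = a_0/2 + Σ_{k=1}^n H_k(v)^{−1}[a_k C_k(v,t) + b_k S_k(v,t)]. Then ST(v2, t) = ST(v3, t) for every real t; i.e., the trigonometric splines built with factors v2 and v3 on the grid Δ_N^{(0)} coincide for every natural r. -/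
open Real Finset

/-!
All indices `j ≡ ±k [mod N]` give the same value of `|sin (πj/N)|`. On this aliasing class the sinc
factor is therefore a constant multiple of the power factor, and the constant, nonzero for
`0 < k < N`, cancels in the quotients `C k / H k` and `S k / H k`.
-/

/-- The index `j` aliases with `k` on a grid of `N` equidistant nodes: `j ≡ ±k [mod N]`. -/
def IsAlias (N k j : ℕ) : Prop :=
  (N : ℤ) ∣ j - k ∨ (N : ℤ) ∣ j + k

/-- The sum of `u` over the aliases of `k` (for `k ≤ N`), with the reflected indices `m * N - k`
weighted by `ε`. The weight is `1` for cosine series and normalizations, `-1` for sine series. The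
index `m` is shifted by one, and the `m`-th pair of terms is kept together, as in the series
defining `C`, `S` and `H`. -/
noncomputable def aliasSum (N : ℕ) (ε : ℝ) (u : ℕ → ℝ) (k : ℕ) : ℝ :=
  u k + ∑' m : ℕ, (u ((m + 1) * N + k) + ε * u ((m + 1) * N - k))

/-- The trigonometric spline `ST(v, x)` with convergence factors `v` and coefficients `a0`, `a k`,
`b k` on the grid `Δ_N^{(0)}`. -/
noncomputable def trigSpline (n N : ℕ) (a0 : ℝ) (a b v : ℕ → ℝ) (x : ℝ) : ℝ :=
  a0 / 2 + ∑ k ∈ Icc 1 n, (aliasSum N 1 v k)⁻¹ *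
    (a k * aliasSum N 1 (fun j ↦ v j * cos (j * x)) k +
      b k * aliasSum N (-1) (fun j ↦ v j * sin (j * x)) k)

/-- The sinc-type convergence factor `|sinc (πj/N)| ^ (1 + r)`, the `v2 j` of the theorem, for a
real exponent. For `r ≠ -1` its value at `j = 0` is `0` because of division by zero; splines with
`n < N` do not use that value. -/
noncomputable def sincFactor (N : ℕ) (r : ℝ) (j : ℕ) : ℝ :=
  |sin (π * j / N) / (π * j / N)| ^ (1 + r)

/-- The power-type convergence factor `j ^ (-(1 + r))`, the `v3 j` of the theorem, for a real
exponent. -/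
noncomputable def powerFactor (r : ℝ) (j : ℕ) : ℝ :=
  ((j : ℝ) ^ (1 + r))⁻¹

theorem isAlias_self (N k : ℕ) : IsAlias N k k :=
  .inl (by simp)

theorem isAlias_mul_add (N k m : ℕ) : IsAlias N k (m * N + k) :=
  .inl (by simp)

theorem isAlias_mul_sub {N k m : ℕ} (hk : k ≤ m * N) : IsAlias N k (m * N - k) :=
  .inr (by simp [Nat.cast_sub hk])

theorem aliasSum_eq_mul {N k : ℕ} {u w : ℕ → ℝ} {c : ℝ} (hk : k ≤ N)
    (h : ∀ j, IsAlias N k j → u j = c * w j) (ε : ℝ) :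
    aliasSum N ε u k = c * aliasSum N ε w k := by
  have hle (m : ℕ) : k ≤ (m + 1) * N := hk.trans (Nat.le_mul_of_pos_left N m.succ_pos)
  simp only [aliasSum, h k (isAlias_self N k), h _ (isAlias_mul_add N k _),
    h _ (isAlias_mul_sub (hle _)), mul_left_comm ε c, ← mul_add, tsum_mul_left]

theorem trigSpline_eq_of_proportional {n N : ℕ} {v w : ℕ → ℝ} (hnN : n ≤ N)
    (h : ∀ k ∈ Icc 1 n, ∃ c ≠ 0, ∀ j, IsAlias N k j → v j = c * w j)
    (a0 : ℝ) (a b : ℕ → ℝ) (x : ℝ) :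
    trigSpline n N a0 a b v x = trigSpline n N a0 a b w x := by
  unfold trigSpline
  congr 1
  refine Finset.sum_congr rfl fun k hk ↦ ?_
  obtain ⟨c, hc, hvw⟩ := h k hk
  have hkN : k ≤ N := (mem_Icc.mp hk).2.trans hnN
  have hmul (f : ℕ → ℝ) (ε : ℝ) :
      aliasSum N ε (fun j ↦ v j * f j) k = c * aliasSum N ε (fun j ↦ w j * f j) k :=
    aliasSum_eq_mul hkN (fun j hj ↦ by rw [hvw j hj, mul_assoc]) ε
  rw [aliasSum_eq_mul hkN hvw, hmul, hmul, mul_left_comm (a k), mul_left_comm (b k), ← mul_add,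
    ← div_eq_inv_mul, ← div_eq_inv_mul, mul_div_mul_left _ _ hc]

theorem abs_sin_add_int_mul_pi (x : ℝ) (q : ℤ) : |sin (x + q * π)| = |sin x| := by
  rw [sin_add_int_mul_pi, abs_mul, abs_zpow, abs_neg, abs_one, one_zpow, one_mul]

theorem IsAlias.abs_sin_eq {N k j : ℕ} (h : IsAlias N k j) :
    |sin (π * j / N)| = |sin (π * k / N)| := by
  rcases N.eq_zero_or_pos with rfl | hN
  · simp
  obtain ⟨q, hq⟩ | ⟨q, hq⟩ := h
  · have hj : (j : ℝ) = k + N * q := by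
      exact_mod_cast (by linear_combination hq : (j : ℤ) = k + N * q)
    rw [← abs_sin_add_int_mul_pi (π * k / N) q, hj]
    congr 2
    field_simp
  · have hj : (j : ℝ) = -k + N * q := by
      exact_mod_cast (by linear_combination hq : (j : ℤ) = -k + N * q)
    rw [← abs_neg (sin (π * k / N)), ← sin_neg, ← abs_sin_add_int_mul_pi (-(π * k / N)) q, hj]
    congr 2
    field_simp

theorem sincFactor_eq_mul_powerFactor (N : ℕ) (r : ℝ) (j : ℕ) :
    sincFactor N r j = (N / π * |sin (π * j / N)|) ^ (1 + r) * powerFactor r j := by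
  have hbase : |sin (π * j / N) / (π * j / N)| = N / π * |sin (π * j / N)| * (j : ℝ)⁻¹ := by
    rw [abs_div, abs_of_nonneg (by positivity : 0 ≤ π * j / N), div_div_eq_mul_div]
    ring
  rw [sincFactor, powerFactor, hbase, mul_rpow (by positivity) (by positivity),
    inv_rpow j.cast_nonneg]

theorem sin_pi_mul_div_pos {k N : ℕ} (hk : 0 < k) (hkN : k < N) : 0 < sin (π * k / N) := by
  have hN : (0 : ℝ) < N := by exact_mod_cast hk.trans hkN
  refine sin_pos_of_pos_of_lt_pi (by positivity) ?_
  rw [div_lt_iff₀ hN]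
  gcongr

theorem spline_v2_eq_spline_v3_grid0_general {n N : ℕ} {r : ℝ} (hnN : n < N) (_hr : 0 < r)
    (a0 : ℝ) (a b : ℕ → ℝ) (x : ℝ) :
    trigSpline n N a0 a b (sincFactor N r) x = trigSpline n N a0 a b (powerFactor r) x := by
  refine trigSpline_eq_of_proportional hnN.le (fun k hk ↦ ?_) a0 a b x
  obtain ⟨hk_pos, hkn⟩ := mem_Icc.mp hk
  have hkN : k < N := hkn.trans_lt hnN
  have hN : 0 < N := Nat.zero_lt_of_lt hkN
  have hsin : 0 < sin (π * k / N) := sin_pi_mul_div_pos hk_pos hkN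
  refine ⟨(N / π * |sin (π * k / N)|) ^ (1 + r), by positivity, fun j hj ↦ ?_⟩
  rw [sincFactor_eq_mul_powerFactor, hj.abs_sin_eq]

/-- The trigonometric splines on the grid `Δ_N^{(0)}` built with the sinc-type convergence
factors `v2 j = |sinc(πj/N)|^{1+r}` and with the power-type factors `v3 j = j^{-(1+r)}`
coincide for every real `t` and every natural `r ≥ 1`. -/
theorem spline_v2_eq_spline_v3_grid0
    (n N r : ℕ) (hn : 1 ≤ n) (hN : N = 2 * n + 1) (hr : 1 ≤ r)
    (a0 : ℝ) (a b : ℕ → ℝ)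
    (v2 v3 : ℕ → ℝ)
    (hv2 : ∀ j, v2 j = |Real.sin (π * j / N) / (π * j / N)| ^ (1 + r))
    (hv3 : ∀ j, v3 j = (((j : ℝ)) ^ (1 + r))⁻¹)
    (C S : (ℕ → ℝ) → ℕ → ℝ → ℝ) (H : (ℕ → ℝ) → ℕ → ℝ)
    (hC : ∀ (v : ℕ → ℝ) (k : ℕ) (x : ℝ), C v k x = v k * Real.cos ((k : ℝ) * x) +
      ∑' m : ℕ, (v ((m + 1) * N + k) * Real.cos ((((m + 1) * N + k : ℕ) : ℝ) * x) +
        v ((m + 1) * N - k) * Real.cos ((((m + 1) * N - k : ℕ) : ℝ) * x)))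
    (hS : ∀ (v : ℕ → ℝ) (k : ℕ) (x : ℝ), S v k x = v k * Real.sin ((k : ℝ) * x) +
      ∑' m : ℕ, (v ((m + 1) * N + k) * Real.sin ((((m + 1) * N + k : ℕ) : ℝ) * x) -
        v ((m + 1) * N - k) * Real.sin ((((m + 1) * N - k : ℕ) : ℝ) * x)))
    (hH : ∀ (v : ℕ → ℝ) (k : ℕ),
      H v k = v k + ∑' m : ℕ, (v ((m + 1) * N + k) + v ((m + 1) * N - k)))
    (ST : (ℕ → ℝ) → ℝ → ℝ)
    (hST : ∀ (v : ℕ → ℝ) (x : ℝ), ST v x = a0 / 2 +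
      ∑ k ∈ Finset.Icc 1 n, (H v k)⁻¹ * (a k * C v k x + b k * S v k x)) :
    ∀ x : ℝ, ST v2 x = ST v3 x := by
  obtain rfl : v2 = sincFactor N r := funext fun j ↦ by
    rw [hv2, sincFactor, ← rpow_natCast, Nat.cast_add, Nat.cast_one]
  obtain rfl : v3 = powerFactor r := funext fun j ↦ by
    rw [hv3, powerFactor, ← rpow_natCast, Nat.cast_add, Nat.cast_one]
  have hST_eq (v : ℕ → ℝ) (x : ℝ) : ST v x = trigSpline n N a0 a b v x := by
    simp only [hST, hC, hS, hH, trigSpline, aliasSum, one_mul, neg_one_mul, ← sub_eq_add_neg]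
  intro x
  rw [hST_eq, hST_eq, spline_v2_eq_spline_v3_grid0_general (by lia) (by exact_mod_cast hr)]
end

section
/- Let n ≥ 1, N = 2n+1, fix k with 1 ≤ k ≤ n and a real number t. For a natural number r ≥ 1 set v_j(r) = j^{−(1+r)} and define C_k(r,t) = v_k(r) cos kt + Σ_{m=1}^∞ [v_{mN+k}(r) cos((mN+k)t) + v_{mN−k}(r) cos((mN−k)t)], S_k(r,t) = v_k(r) sin kt + Σ_{m=1}^∞ [v_{mN+k}(r) sin((mN+k)t) − v_{mN−k}(r) sin((mN−k)t)], and H_k(r) = v_k(r) + Σ_{m=1}^∞ [v_{mN+k}(r) + v_{mN−k}(r)]. Then, as r → ∞ over the natural numbers, C_k(r,t)/H_k(r) → cos kt and S_k(r,t)/H_k(r) → sin kt. -/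
open Real Finset Filter

/-!
After division by `v_k(r)`, the terms of the three series at a frequency `j ≠ k` carry the factor
`(k / j) ^ (1 + r)`. Since `2k < N`, every such `j` exceeds `k`, so each of these terms tends to
zero, and for `r ≥ 1` all of them are dominated by the summable `(k / j) ^ 2`. By dominated
convergence only the leading terms survive in the quotients.
-/

section LeadingTerm

open Asymptotics Topology

theorem isLittleO_tsum_pow_mul {ι 𝕜 : Type*} [NormedField 𝕜] [CompleteSpace 𝕜]
    {η : 𝕜} {y c : ι → 𝕜} {s : ℕ} (hη : η ≠ 0) (hy : ∀ i, ‖y i‖ < ‖η‖)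
    (hs : Summable fun i ↦ ‖y i ^ s * c i‖) :
    (fun r : ℕ ↦ ∑' i, y i ^ r * c i) =o[atTop] fun r ↦ η ^ r := by
  have quotient_lt_one (i : ι) : ‖y i / η‖ < 1 := by
    rw [norm_div, div_lt_one (norm_pos_iff.2 hη)]
    exact hy i
  have terms_tendsto (i : ι) : Tendsto (fun r : ℕ ↦ (y i / η) ^ r * c i) atTop (𝓝 0) := by
    simpa only [zero_mul] using
      (tendsto_pow_atTop_nhds_zero_of_norm_lt_one (quotient_lt_one i)).mul_const (c i)
  have terms_dominated : ∀ᶠ r in atTop, ∀ i, ‖(y i / η) ^ r * c i‖ ≤ ‖(y i / η) ^ s * c i‖ := by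
    filter_upwards [eventually_ge_atTop s] with r hr i
    simp only [norm_mul, norm_pow]
    gcongr ?_ * _
    exact pow_le_pow_of_le_one (norm_nonneg _) (quotient_lt_one i).le hr
  have dominating_summable : Summable fun i ↦ ‖(y i / η) ^ s * c i‖ := by
    simpa only [div_pow, div_mul_eq_mul_div, norm_div] using hs.div_const ‖η ^ s‖
  rw [isLittleO_iff_tendsto fun r h ↦ absurd h (pow_ne_zero r hη)]
  simpa only [div_pow, div_mul_eq_mul_div, tsum_div_const, tsum_zero] using
    tendsto_tsum_of_dominated_convergence dominating_summable terms_tendsto terms_dominated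

theorem tendsto_mul_add_div_add_of_isLittleO {α 𝕜 : Type*} [NormedField 𝕜] {l : Filter α}
    {w T U : α → 𝕜} (c : 𝕜) (hw : ∀ᶠ x in l, w x ≠ 0) (hT : T =o[l] w) (hU : U =o[l] w) :
    Tendsto (fun x ↦ (w x * c + T x) / (w x + U x)) l (𝓝 c) := by
  have normalized : Tendsto (fun x ↦ (c + T x / w x) / (1 + U x / w x)) l (𝓝 c) := by
    simpa only [Pi.div_def, add_zero, div_one] using (hT.tendsto_div_nhds_zero.const_add c).div
      (hU.tendsto_div_nhds_zero.const_add 1) (by simp)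
  refine normalized.congr' ?_
  filter_upwards [hw] with x hx
  rw [← mul_div_mul_left _ _ hx, mul_add, mul_add, mul_div_cancel₀ _ hx, mul_div_cancel₀ _ hx,
    mul_one]

end LeadingTerm

section AliasedTail

open Asymptotics Topology

theorem summable_inv_natCast_pow_mul {ι : Type*} {f : ι → ℕ} (hf : f.Injective) {c : ι → ℝ}
    {B : ℝ} (hc : ∀ i, |c i| ≤ B) {r : ℕ} (hr : 1 < r) :
    Summable fun i ↦ ((f i : ℝ) ^ r)⁻¹ * c i := by
  refine (((summable_nat_pow_inv.2 hr).comp_injective hf).mul_right B).of_norm_bounded fun i ↦ ?_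
  rw [norm_mul, norm_of_nonneg (by positivity)]
  exact mul_le_mul_of_nonneg_left (hc i) (by positivity)

theorem isLittleO_tsum_inv_natCast_pow_mul {ι : Type*} {f : ι → ℕ} (hf : f.Injective) {k : ℕ}
    (hk : 0 < k) (hkf : ∀ i, k < f i) {c : ι → ℝ} {B : ℝ} (hc : ∀ i, |c i| ≤ B) :
    (fun r : ℕ ↦ ∑' i, ((f i : ℝ) ^ r)⁻¹ * c i) =o[atTop] fun r ↦ ((k : ℝ) ^ r)⁻¹ := by
  have inv_lt_inv (i : ι) : ‖(f i : ℝ)⁻¹‖ < ‖(k : ℝ)⁻¹‖ := by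
    simpa only [norm_inv, norm_natCast] using
      inv_strictAnti₀ (Nat.cast_pos.2 hk) (Nat.cast_lt.2 (hkf i))
  have summable_sq : Summable fun i ↦ ‖(f i : ℝ)⁻¹ ^ 2 * c i‖ := by
    simpa only [inv_pow] using (summable_inv_natCast_pow_mul hf hc one_lt_two).norm
  simpa only [inv_pow] using
    isLittleO_tsum_pow_mul (inv_ne_zero (Nat.cast_ne_zero.2 hk.ne')) inv_lt_inv summable_sq

/-- The tail `∑_{m ≥ 1} (a_m / (mN + k) ^ r + b_m / (mN - k) ^ r)` of an aliased kernel, that is,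
the contribution of the frequencies that alias to `k` on a grid of `N` points. The summation index
is shifted, so `a m` and `b m` are the coefficients belonging to `m + 1`; the natural subtraction
is the true one as long as `k ≤ N`. -/
noncomputable def aliasedTail (N k : ℕ) (a b : ℕ → ℝ) (r : ℕ) : ℝ :=
  ∑' m : ℕ, ((((m + 1) * N + k : ℕ) ^ r : ℝ)⁻¹ * a m + (((m + 1) * N - k : ℕ) ^ r : ℝ)⁻¹ * b m)

variable {N k : ℕ} {a b : ℕ → ℝ} {A B : ℝ}

theorem isLittleO_aliasedTail (hk : 0 < k) (hkN : 2 * k < N) (ha : ∀ m, |a m| ≤ A)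
    (hb : ∀ m, |b m| ≤ B) :
    aliasedTail N k a b =o[atTop] fun r ↦ ((k : ℝ) ^ r)⁻¹ := by
  have lt_sub (m : ℕ) : k < (m + 1) * N - k := by
    have := Nat.le_mul_of_pos_left N m.succ_pos
    lia
  have lt_add (m : ℕ) : k < (m + 1) * N + k := by
    have := lt_sub m
    lia
  have strictMono_mul : StrictMono fun m ↦ (m + 1) * N := fun _ _ h ↦
    Nat.mul_lt_mul_of_pos_right (Nat.add_lt_add_right h 1) (by lia)
  have injective_add : (fun m ↦ (m + 1) * N + k).Injective :=
    (strictMono_mul.add_const k).injective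
  have injective_sub : (fun m ↦ (m + 1) * N - k).Injective := fun m m' h ↦
    strictMono_mul.injective (by grind [lt_sub m, lt_sub m'])
  have tail_add := isLittleO_tsum_inv_natCast_pow_mul injective_add hk lt_add ha
  have tail_sub := isLittleO_tsum_inv_natCast_pow_mul injective_sub hk lt_sub hb
  refine (tail_add.add tail_sub).congr' ?_ .rfl
  filter_upwards [eventually_gt_atTop 1] with r hr
  exact ((summable_inv_natCast_pow_mul injective_add ha hr).tsum_add
    (summable_inv_natCast_pow_mul injective_sub hb hr)).symm

theorem tendsto_leading_add_aliasedTail_div (hk : 0 < k) (hkN : 2 * k < N)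
    (ha : ∀ m, |a m| ≤ A) (hb : ∀ m, |b m| ≤ B) (c : ℝ) :
    Tendsto (fun r : ℕ ↦ (((k : ℝ) ^ r)⁻¹ * c + aliasedTail N k a b r) /
      (((k : ℝ) ^ r)⁻¹ + aliasedTail N k 1 1 r)) atTop (𝓝 c) := by
  have leading_ne_zero (r : ℕ) : ((k : ℝ) ^ r)⁻¹ ≠ 0 := by positivity
  have abs_one_le (m : ℕ) : |(1 : ℕ → ℝ) m| ≤ 1 := abs_one.le
  exact tendsto_mul_add_div_add_of_isLittleO c (.of_forall leading_ne_zero)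
    (isLittleO_aliasedTail hk hkN ha hb) (isLittleO_aliasedTail hk hkN abs_one_le abs_one_le)

end AliasedTail

theorem kernel_quotients_tendsto_r_general
    (N k : ℕ) (hk : 0 < k) (hkN : 2 * k < N) (t : ℝ)
    (v : ℕ → ℕ → ℝ) (hv : ∀ r j, v r j = (((j : ℝ)) ^ (1 + r))⁻¹)
    (C S H : ℕ → ℝ)
    (hC : ∀ r : ℕ, 1 ≤ r → C r = v r k * Real.cos ((k : ℝ) * t) +
      ∑' m : ℕ, (v r ((m + 1) * N + k) * Real.cos ((((m + 1) * N + k : ℕ) : ℝ) * t) +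
        v r ((m + 1) * N - k) * Real.cos ((((m + 1) * N - k : ℕ) : ℝ) * t)))
    (hS : ∀ r : ℕ, 1 ≤ r → S r = v r k * Real.sin ((k : ℝ) * t) +
      ∑' m : ℕ, (v r ((m + 1) * N + k) * Real.sin ((((m + 1) * N + k : ℕ) : ℝ) * t) -
        v r ((m + 1) * N - k) * Real.sin ((((m + 1) * N - k : ℕ) : ℝ) * t)))
    (hH : ∀ r : ℕ, 1 ≤ r →
      H r = v r k + ∑' m : ℕ, (v r ((m + 1) * N + k) + v r ((m + 1) * N - k))) :
    Tendsto (fun r : ℕ => C r / H r) atTop (nhds (Real.cos ((k : ℝ) * t))) ∧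
    Tendsto (fun r : ℕ => S r / H r) atTop (nhds (Real.sin ((k : ℝ) * t))) := by
  have exponent_tendsto : Tendsto (fun r ↦ 1 + r) atTop atTop :=
    tendsto_atTop_mono (Nat.le_add_left · 1) tendsto_id
  constructor
  · refine ((tendsto_leading_add_aliasedTail_div hk hkN
      (fun m ↦ abs_cos_le_one (((m + 1) * N + k : ℕ) * t))
      (fun m ↦ abs_cos_le_one (((m + 1) * N - k : ℕ) * t))
      (cos (k * t))).comp exponent_tendsto).congr' ?_
    filter_upwards [eventually_ge_atTop 1] with r hr
    simp only [Function.comp_apply, hC r hr, hH r hr, hv, aliasedTail, Pi.one_apply, mul_one]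
  · refine ((tendsto_leading_add_aliasedTail_div hk hkN
      (fun m ↦ abs_sin_le_one (((m + 1) * N + k : ℕ) * t))
      (fun m ↦ (abs_neg _).trans_le (abs_sin_le_one (((m + 1) * N - k : ℕ) * t)))
      (sin (k * t))).comp exponent_tendsto).congr' ?_
    filter_upwards [eventually_ge_atTop 1] with r hr
    simp only [Function.comp_apply, hS r hr, hH r hr, hv, aliasedTail, Pi.one_apply, mul_one,
      mul_neg, sub_eq_add_neg]

/-- Component limits behind Theorem 2 of the paper: for the power-type factors
`v r j = j^{-(1+r)}` and fixed `k`, `t`, the normalized aliased kernels converge to the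
pure harmonics as the smoothness parameter `r → ∞`:
`C k (r,t) / H k (r) → cos kt` and `S k (r,t) / H k (r) → sin kt`. -/
theorem kernel_quotients_tendsto_r
    (n N : ℕ) (hn : 1 ≤ n) (hN : N = 2 * n + 1)
    (k : ℕ) (hk1 : 1 ≤ k) (hkn : k ≤ n) (t : ℝ)
    (v : ℕ → ℕ → ℝ) (hv : ∀ r j, v r j = (((j : ℝ)) ^ (1 + r))⁻¹)
    (C S H : ℕ → ℝ)
    (hC : ∀ r : ℕ, 1 ≤ r → C r = v r k * Real.cos ((k : ℝ) * t) +
      ∑' m : ℕ, (v r ((m + 1) * N + k) * Real.cos ((((m + 1) * N + k : ℕ) : ℝ) * t) +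
        v r ((m + 1) * N - k) * Real.cos ((((m + 1) * N - k : ℕ) : ℝ) * t)))
    (hS : ∀ r : ℕ, 1 ≤ r → S r = v r k * Real.sin ((k : ℝ) * t) +
      ∑' m : ℕ, (v r ((m + 1) * N + k) * Real.sin ((((m + 1) * N + k : ℕ) : ℝ) * t) -
        v r ((m + 1) * N - k) * Real.sin ((((m + 1) * N - k : ℕ) : ℝ) * t)))
    (hH : ∀ r : ℕ, 1 ≤ r →
      H r = v r k + ∑' m : ℕ, (v r ((m + 1) * N + k) + v r ((m + 1) * N - k))) :
    Tendsto (fun r : ℕ => C r / H r) atTop (nhds (Real.cos ((k : ℝ) * t))) ∧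
    Tendsto (fun r : ℕ => S r / H r) atTop (nhds (Real.sin ((k : ℝ) * t))) := by
  exact kernel_quotients_tendsto_r_general N k hk1 (by lia) t v hv C S H hC hS hH
end
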